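/- Functional Santaló inequality (Lehec): Let d ≥ 1 and let f and g be measurable functions on ℝ^d satisfying f(x) + g(y) ≤ −x·y for all x, y ∈ ℝ^d. If e^f is integrable with ∫ x e^{f(x)} dx = 0 (barycenter at the origin), then (∫ e^{f(x)} dx)(∫ e^{g(y)} dy) ≤ (2π)^d. -/

import Mathlib

open MeasureTheory
open scoped RealInnerProductSpace

/-!
Prékopa–Leindler after the substitution `s = exp x` gives the inequality on a half-line: if
`F s * G t ≤ K * exp (-(s * t))` for `s, t > 0`, then `(∫ F) (∫ G) ≤ K * π / 2`. The theorem
follows by induction on the dimension. Cut the space by a hyperplane that halves the mass of `G`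
and move `G` by a translation and a shear so that the barycenters of its two halves lie on the axis
transverse to the hyperplane. On each half-space, integrating out the transverse variable produces,
by the half-line inequality, a polar pair in one dimension less whose second function is centered,
so the induction hypothesis applies. Since the two halves of `G` have equal mass, adding the two
bounds gives `4 * (π / 2) = 2 * π` for the new dimension. The shear of `G` is compensated by a
volume-preserving shear of `F`, and the translation of `G` by a factor `exp (B x a)` on `F`, which
does not decrease `∫ F`: `1 + u ≤ exp u` and `F` has its barycenter at the origin.
-/

open Set Module
open scoped ENNReal Pointwise

section PrekopaLeindler

theorem volume_add_volume_le_of_isGreatest_of_isLeast {A B : Set ℝ} {a b : ℝ}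
    (ha : IsGreatest A a) (hb : IsLeast B b) (hB : MeasurableSet B) :
    volume A + volume B ≤ volume (A + B) := by
  have hdisj : AEDisjoint volume (b +ᵥ A) (a +ᵥ B) := by
    refine measure_mono_null (t := {a + b}) ?_ (by simp)
    rintro _ ⟨⟨x, hx, rfl⟩, y, hy, hxy⟩
    have := ha.2 hx
    have := hb.2 hy
    simp only [vadd_eq_add, mem_singleton_iff] at hxy ⊢
    linarith
  calc volume A + volume B = volume (b +ᵥ A) + volume (a +ᵥ B) := by simp only [measure_vadd]
    _ = volume ((b +ᵥ A) ∪ (a +ᵥ B)) :=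
      (measure_union₀ (hB.const_vadd a).nullMeasurableSet hdisj).symm
    _ ≤ volume (A + B) := by
      refine measure_mono (union_subset ?_ (vadd_set_subset_add ha.1))
      rw [add_comm A]
      exact vadd_set_subset_add hb.1

theorem volume_add_volume_le_volume_add {A B : Set ℝ} (hA : MeasurableSet A)
    (hB : MeasurableSet B) (hA₀ : A.Nonempty) (hB₀ : B.Nonempty) :
    volume A + volume B ≤ volume (A + B) := by
  obtain ⟨a, ha⟩ := hA₀
  obtain ⟨b, hb⟩ := hB₀
  rw [hA.measure_eq_iSup_isCompact, hB.measure_eq_iSup_isCompact]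
  simp_rw [iSup_and']
  refine ENNReal.biSup_add_biSup_le' ⟨∅, by simp⟩ ⟨∅, by simp⟩ fun K ⟨hKA, hK⟩ L ⟨hLB, hL⟩ => ?_
  obtain ⟨_, hmax⟩ := (hK.insert a).exists_isGreatest (insert_nonempty a K)
  obtain ⟨_, hmin⟩ := (hL.insert b).exists_isLeast (insert_nonempty b L)
  calc volume K + volume L ≤ volume (insert a K) + volume (insert b L) := by
        gcongr <;> exact subset_insert _ _
    _ ≤ volume (insert a K + insert b L) :=
      volume_add_volume_le_of_isGreatest_of_isLeast hmax hmin (hL.insert b).measurableSet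
    _ ≤ volume (A + B) := by
      gcongr
      exacts [insert_subset ha hKA, insert_subset hb hLB]

theorem lintegral_min_one_eq_lintegral_meas_lt {α : Type*} [MeasurableSpace α] (μ : Measure α)
    {f : α → ℝ≥0∞} (hf : Measurable f) :
    ∫⁻ x, min (f x) 1 ∂μ = ∫⁻ t in Ioo (0 : ℝ) 1, μ {x | ENNReal.ofReal t < f x} := by
  have hfin : ∀ x, min (f x) 1 ≠ ∞ := fun x => ne_top_of_le_ne_top (by simp) (min_le_right _ _)
  calc ∫⁻ x, min (f x) 1 ∂μ = ∫⁻ x, ENNReal.ofReal (min (f x) 1).toReal ∂μ := by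
        simp only [ENNReal.ofReal_toReal (hfin _)]
    _ = ∫⁻ t in Ioi (0 : ℝ), μ {x | t < (min (f x) 1).toReal} :=
      lintegral_eq_lintegral_meas_lt μ (.of_forall fun _ => ENNReal.toReal_nonneg)
        (by fun_prop)
    _ = ∫⁻ t in Ioi (0 : ℝ), (Ioo 0 1).indicator (fun t => μ {x | ENNReal.ofReal t < f x}) t := by
      refine setLIntegral_congr_fun measurableSet_Ioi fun t (ht : 0 < t) => ?_
      by_cases ht₁ : t < 1
      · simp [← ENNReal.ofReal_lt_iff_lt_toReal ht.le (hfin _), ht, ht₁]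
      · simp [← ENNReal.ofReal_lt_iff_lt_toReal ht.le (hfin _), ht₁]
    _ = ∫⁻ t in Ioo (0 : ℝ) 1, μ {x | ENNReal.ofReal t < f x} := by
      rw [setLIntegral_indicator measurableSet_Ioo, inter_eq_left.2 Ioo_subset_Ioi_self]

theorem rpow_mul_rpow_le_add {p q : ℝ} (hp : 0 < p) (hq : 0 < q) (hpq : p + q = 1)
    (a b : ℝ≥0∞) :
    a ^ p * b ^ q ≤ ENNReal.ofReal p * a + ENNReal.ofReal q * b := by
  have hconj : p⁻¹.HolderConjugate q⁻¹ := Real.holderConjugate_iff.2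
    ⟨(one_lt_inv₀ hp).2 (by linarith), by simpa using hpq⟩
  refine (ENNReal.young_inequality _ _ hconj).trans_eq ?_
  rw [ENNReal.rpow_rpow_inv hp.ne', ENNReal.rpow_rpow_inv hq.ne',
    ENNReal.ofReal_inv_of_pos hp, ENNReal.ofReal_inv_of_pos hq, div_eq_mul_inv, div_eq_mul_inv,
    inv_inv, inv_inv, mul_comm a, mul_comm b]

variable {p q : ℝ} {f g h : ℝ → ℝ≥0∞}

theorem ofReal_mul_volume_add_le_volume (hp : 0 < p) (hq : 0 < q) (hpq : p + q = 1)
    (hf : Measurable f) (hg : Measurable g)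
    (hfg : ∀ x y, f x ^ p * g y ^ q ≤ h (p * x + q * y)) {t : ℝ≥0∞}
    (htf : ∃ x, t < f x) (htg : ∃ y, t < g y) :
    ENNReal.ofReal p * volume {x | t < f x} + ENNReal.ofReal q * volume {x | t < g x} ≤
      volume {x | t < h x} := by
  have hscale : ∀ {c : ℝ} (A : Set ℝ), 0 < c →
      ENNReal.ofReal c * volume A = volume (c • A) := fun A hc => by
    simp [Measure.addHaar_smul, abs_of_pos hc]
  rw [hscale _ hp, hscale _ hq]
  calc _ ≤ volume (p • {x | t < f x} + q • {x | t < g x}) :=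
        volume_add_volume_le_volume_add ((measurableSet_lt measurable_const hf).const_smul₀ p)
          ((measurableSet_lt measurable_const hg).const_smul₀ q) (Set.Nonempty.smul_set htf)
          (Set.Nonempty.smul_set htg)
    _ ≤ volume {x | t < h x} := by
      refine measure_mono ?_
      rintro _ ⟨_, ⟨x, hx, rfl⟩, _, ⟨y, hy, rfl⟩, rfl⟩
      calc t = t ^ p * t ^ q := by
            rw [← ENNReal.rpow_add_of_nonneg _ _ hp.le hq.le, hpq, ENNReal.rpow_one]
        _ < f x ^ p * g y ^ q :=
            ENNReal.mul_lt_mul (ENNReal.rpow_lt_rpow hx hp) (ENNReal.rpow_lt_rpow hy hq)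
        _ ≤ h (p * x + q * y) := hfg x y

theorem lintegral_min_one_rpow_mul_le (hp : 0 < p) (hq : 0 < q) (hpq : p + q = 1)
    (hf : Measurable f) (hg : Measurable g) (hh : Measurable h)
    (hfg : ∀ x y, f x ^ p * g y ^ q ≤ h (p * x + q * y))
    (hf₁ : 1 ≤ ⨆ x, f x) (hg₁ : 1 ≤ ⨆ x, g x) :
    (∫⁻ x, min (f x) 1) ^ p * (∫⁻ x, min (g x) 1) ^ q ≤ ∫⁻ x, h x := by
  have hlevel : ∀ {φ : ℝ → ℝ≥0∞} {t : ℝ}, 1 ≤ ⨆ x, φ x → t ∈ Ioo 0 1 →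
      ∃ x, ENNReal.ofReal t < φ x := fun hφ ht =>
    lt_iSup_iff.1 ((ENNReal.ofReal_lt_one.2 ht.2).trans_le hφ)
  have hanti : Measurable fun t : ℝ => volume {x | ENNReal.ofReal t < f x} :=
    Antitone.measurable fun s t hst => measure_mono fun x hx =>
      (ENNReal.ofReal_le_ofReal hst).trans_lt hx
  calc _ ≤ ENNReal.ofReal p * (∫⁻ x, min (f x) 1) + ENNReal.ofReal q * (∫⁻ x, min (g x) 1) :=
        rpow_mul_rpow_le_add hp hq hpq _ _
    _ = ∫⁻ t in Ioo (0 : ℝ) 1, (ENNReal.ofReal p * volume {x | ENNReal.ofReal t < f x} +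
          ENNReal.ofReal q * volume {x | ENNReal.ofReal t < g x}) := by
      rw [lintegral_add_left (hanti.const_mul _), lintegral_const_mul' _ _ (by simp),
        lintegral_const_mul' _ _ (by simp), lintegral_min_one_eq_lintegral_meas_lt _ hf,
        lintegral_min_one_eq_lintegral_meas_lt _ hg]
    _ ≤ ∫⁻ t in Ioo (0 : ℝ) 1, volume {x | ENNReal.ofReal t < h x} :=
      setLIntegral_mono' measurableSet_Ioo fun t ht =>
        ofReal_mul_volume_add_le_volume hp hq hpq hf hg hfg (hlevel hf₁ ht) (hlevel hg₁ ht)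
    _ = ∫⁻ x, min (h x) 1 := (lintegral_min_one_eq_lintegral_meas_lt _ hh).symm
    _ ≤ ∫⁻ x, h x := lintegral_mono fun x => min_le_left _ _

theorem lintegral_min_rpow_mul_le (hp : 0 < p) (hq : 0 < q) (hpq : p + q = 1)
    (hf : Measurable f) (hg : Measurable g) (hh : Measurable h)
    (hfg : ∀ x y, f x ^ p * g y ^ q ≤ h (p * x + q * y)) {a b : ℝ≥0∞}
    (ha₀ : a ≠ 0) (ha : a ≠ ∞) (hb₀ : b ≠ 0) (hb : b ≠ ∞)
    (haf : a ≤ ⨆ x, f x) (hbg : b ≤ ⨆ x, g x) :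
    (∫⁻ x, min (f x) a) ^ p * (∫⁻ x, min (g x) b) ^ q ≤ ∫⁻ x, h x := by
  have hsup : ∀ {φ : ℝ → ℝ≥0∞} {c : ℝ≥0∞}, c ≠ 0 → c ≠ ∞ → c ≤ ⨆ x, φ x →
      1 ≤ ⨆ x, c⁻¹ * φ x := fun {φ c} hc₀ hc hφ => by
    rw [← ENNReal.mul_iSup, ← ENNReal.inv_mul_cancel hc₀ hc]
    gcongr
  have hint : ∀ {φ : ℝ → ℝ≥0∞} {c : ℝ≥0∞}, c ≠ 0 → c ≠ ∞ →
      ∫⁻ x, min (c⁻¹ * φ x) 1 = c⁻¹ * ∫⁻ x, min (φ x) c := fun {φ c} hc₀ hc => by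
    rw [← lintegral_const_mul' _ _ (ENNReal.inv_ne_top.2 hc₀)]
    simp only [mul_min, ENNReal.inv_mul_cancel hc₀ hc]
  have hab₀ : (a⁻¹) ^ p * (b⁻¹) ^ q ≠ 0 := by
    simp [ENNReal.rpow_eq_zero_iff, ha, hb, hp.not_gt, hq.not_gt]
  have hab : (a⁻¹) ^ p * (b⁻¹) ^ q ≠ ∞ := ENNReal.mul_ne_top
    (ENNReal.rpow_ne_top_of_nonneg hp.le (ENNReal.inv_ne_top.2 ha₀))
    (ENNReal.rpow_ne_top_of_nonneg hq.le (ENNReal.inv_ne_top.2 hb₀))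
  have hnorm := lintegral_min_one_rpow_mul_le (f := fun x => a⁻¹ * f x)
    (g := fun x => b⁻¹ * g x) (h := fun x => (a⁻¹) ^ p * (b⁻¹) ^ q * h x) hp hq hpq
    (by fun_prop) (by fun_prop) (by fun_prop) (fun x y => by
      rw [ENNReal.mul_rpow_of_nonneg _ _ hp.le, ENNReal.mul_rpow_of_nonneg _ _ hq.le,
        mul_mul_mul_comm]
      gcongr
      exact hfg x y) (hsup ha₀ ha haf) (hsup hb₀ hb hbg)
  rwa [hint ha₀ ha, hint hb₀ hb, lintegral_const_mul' _ _ hab,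
    ENNReal.mul_rpow_of_nonneg _ _ hp.le, ENNReal.mul_rpow_of_nonneg _ _ hq.le,
    mul_mul_mul_comm, ENNReal.mul_le_mul_iff_right hab₀ hab] at hnorm

theorem tendsto_lintegral_min_natCast {α : Type*} [MeasurableSpace α] (μ : Measure α)
    {f : α → ℝ≥0∞} (hf : Measurable f) :
    Filter.Tendsto (fun n : ℕ => ∫⁻ x, min (f x) n ∂μ) Filter.atTop (nhds (∫⁻ x, f x ∂μ)) := by
  refine lintegral_tendsto_of_tendsto_of_monotone (fun n => by fun_prop)
    (.of_forall fun x m n hmn => min_le_min_left _ (Nat.cast_le.2 hmn)) (.of_forall fun x => ?_)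
  simpa using (tendsto_const_nhds (x := f x)).min ENNReal.tendsto_nat_nhds_top

theorem prekopa_leindler_real (hp : 0 < p) (hq : 0 < q) (hpq : p + q = 1)
    (hf : Measurable f) (hg : Measurable g) (hh : Measurable h)
    (hfg : ∀ x y, f x ^ p * g y ^ q ≤ h (p * x + q * y)) :
    (∫⁻ x, f x) ^ p * (∫⁻ x, g x) ^ q ≤ ∫⁻ x, h x := by
  rcases eq_or_ne (∫⁻ x, f x) 0 with hf₀ | hf₀
  · simp [hf₀, hp]
  rcases eq_or_ne (∫⁻ x, g x) 0 with hg₀ | hg₀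
  · simp [hg₀, hq]
  have hsup : ∀ {φ : ℝ → ℝ≥0∞}, ∫⁻ x, φ x ≠ 0 → ⨆ x, φ x ≠ 0 := fun {φ} hφ h₀ =>
    hφ (by simp [ENNReal.iSup_eq_zero.1 h₀])
  have hmin : ∀ (φ : ℝ → ℝ≥0∞) (n : ℕ) (x : ℝ), min (φ x) (min (⨆ x, φ x) n) = min (φ x) n :=
    fun φ n x => by rw [← min_assoc, min_eq_left (le_iSup φ x)]
  have hlim := ENNReal.Tendsto.mul ((tendsto_lintegral_min_natCast volume hf).ennrpow_const p)
    (by simp [hf₀, hp.not_gt]) ((tendsto_lintegral_min_natCast volume hg).ennrpow_const q)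
    (by simp [hg₀, hq.not_gt])
  refine le_of_tendsto hlim ((Filter.eventually_gt_atTop 0).mono fun n hn => ?_)
  have hn₀ : (n : ℝ≥0∞) ≠ 0 := by exact_mod_cast hn.ne'
  have key := lintegral_min_rpow_mul_le (a := min (⨆ x, f x) n) (b := min (⨆ x, g x) n)
    hp hq hpq hf hg hh hfg (by simp [hsup hf₀, hn₀]) (by simp) (by simp [hsup hg₀, hn₀]) (by simp)
    (min_le_left _ _) (min_le_left _ _)
  simpa only [hmin] using key

end PrekopaLeindler

section HalfLine

theorem lintegral_Ioi_eq_lintegral_exp (f : ℝ → ℝ≥0∞) :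
    ∫⁻ s in Ioi 0, f s = ∫⁻ x, ENNReal.ofReal (Real.exp x) * f (Real.exp x) := by
  have h := lintegral_image_eq_lintegral_abs_deriv_mul MeasurableSet.univ
    (fun x _ => (Real.hasDerivAt_exp x).hasDerivWithinAt) Real.exp_injective.injOn f
  simpa only [image_univ, Real.range_exp, setLIntegral_univ, Real.abs_exp] using h

theorem prekopa_leindler_Ioi {p q : ℝ} {f g h : ℝ → ℝ≥0∞} (hp : 0 < p) (hq : 0 < q)
    (hpq : p + q = 1) (hf : Measurable f) (hg : Measurable g) (hh : Measurable h)
    (hfg : ∀ s t, 0 < s → 0 < t → f s ^ p * g t ^ q ≤ h (s ^ p * t ^ q)) :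
    (∫⁻ s in Ioi 0, f s) ^ p * (∫⁻ t in Ioi 0, g t) ^ q ≤ ∫⁻ r in Ioi 0, h r := by
  simp only [lintegral_Ioi_eq_lintegral_exp]
  refine prekopa_leindler_real hp hq hpq (by fun_prop) (by fun_prop) (by fun_prop) fun x y => ?_
  have hexp : Real.exp (p * x + q * y) = Real.exp x ^ p * Real.exp y ^ q := by
    rw [Real.exp_add, mul_comm p, mul_comm q, Real.exp_mul, Real.exp_mul]
  rw [hexp, ENNReal.ofReal_mul (by positivity), ENNReal.mul_rpow_of_nonneg _ _ hp.le,
    ENNReal.mul_rpow_of_nonneg _ _ hq.le, mul_mul_mul_comm,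
    ENNReal.ofReal_rpow_of_nonneg (by positivity) hp.le,
    ENNReal.ofReal_rpow_of_nonneg (by positivity) hq.le]
  gcongr
  exact hfg _ _ (Real.exp_pos x) (Real.exp_pos y)

theorem lintegral_Ioi_exp_neg_sq_div_two :
    ∫⁻ r in Ioi (0 : ℝ), ENNReal.ofReal (Real.exp (-(r ^ 2 / 2))) =
      ENNReal.ofReal √(Real.pi / 2) := by
  have hexp : ∀ r : ℝ, Real.exp (-(r ^ 2 / 2)) = Real.exp (-(1 / 2) * r ^ 2) := fun r => by
    ring_nf
  simp_rw [hexp]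
  rw [← ofReal_integral_eq_lintegral_ofReal
    (integrable_exp_neg_mul_sq (by norm_num)).integrableOn (.of_forall fun r => by positivity),
    integral_gaussian_Ioi]
  congr 1
  rw [show Real.pi / (1 / 2) = 2 ^ 2 * (Real.pi / 2) by ring, Real.sqrt_mul (by norm_num),
    Real.sqrt_sq (by norm_num)]
  ring

theorem lintegral_Ioi_mul_lintegral_Ioi_le {f g : ℝ → ℝ≥0∞} {K : ℝ≥0∞} (hf : Measurable f)
    (hg : Measurable g)
    (hfg : ∀ s t, 0 < s → 0 < t → f s * g t ≤ K * ENNReal.ofReal (Real.exp (-(s * t)))) :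
    (∫⁻ s in Ioi 0, f s) * (∫⁻ t in Ioi 0, g t) ≤ K * ENNReal.ofReal (Real.pi / 2) := by
  have hhalf : (0 : ℝ) ≤ 1 / 2 := by norm_num
  have hsq : ∀ u : ℝ≥0∞, (u ^ (1 / 2 : ℝ)) ^ 2 = u := fun u => by
    rw [← ENNReal.rpow_natCast, ← ENNReal.rpow_mul]
    norm_num
  have key := prekopa_leindler_Ioi (p := 1 / 2) (q := 1 / 2)
    (h := fun r => K ^ (1 / 2 : ℝ) * ENNReal.ofReal (Real.exp (-(r ^ 2 / 2)))) (by norm_num)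
    (by norm_num) (by norm_num) hf hg (by fun_prop) fun s t hs ht => by
      have hst : (s ^ (1 / 2 : ℝ) * t ^ (1 / 2 : ℝ)) ^ 2 = s * t := by
        rw [← Real.sqrt_eq_rpow, ← Real.sqrt_eq_rpow, mul_pow, Real.sq_sqrt hs.le,
          Real.sq_sqrt ht.le]
      have hexp : Real.exp (-(s * t / 2)) = Real.exp (-(s * t)) ^ (1 / 2 : ℝ) := by
        rw [← Real.exp_mul]
        ring_nf
      rw [hst, hexp, ← ENNReal.ofReal_rpow_of_nonneg (by positivity) hhalf,
        ← ENNReal.mul_rpow_of_nonneg _ _ hhalf, ← ENNReal.mul_rpow_of_nonneg _ _ hhalf]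
      exact ENNReal.rpow_le_rpow (hfg s t hs ht) hhalf
  rw [lintegral_const_mul _ (by fun_prop), lintegral_Ioi_exp_neg_sq_div_two,
    ← ENNReal.mul_rpow_of_nonneg _ _ hhalf] at key
  calc _ ≤ (K ^ (1 / 2 : ℝ) * ENNReal.ofReal √(Real.pi / 2)) ^ 2 := by
        rw [← hsq ((∫⁻ s in Ioi 0, f s) * _)]
        gcongr
    _ = K * ENNReal.ofReal (Real.pi / 2) := by
      rw [mul_pow, hsq, ← ENNReal.ofReal_pow (by positivity), Real.sq_sqrt (by positivity)]

end HalfLine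

section ExponentialDecay

variable {E : Type*} [NormedAddCommGroup E] [NormedSpace ℝ E] [FiniteDimensional ℝ E]

variable (E) in
theorem exists_finset_strongDual_norm_le :
    ∃ t : Finset (StrongDual ℝ E), ∀ x : E, ∃ ℓ ∈ t, ‖x‖ ≤ ℓ x := by
  classical
  choose ℓ _ hℓ using fun x : E => exists_dual_vector'' ℝ x
  obtain ⟨t, -, ht⟩ := (isCompact_sphere (0 : E) 1).elim_nhds_subcover
    (fun x => {y | 1 < 2 * ℓ x y}) fun x hx => by
      refine (isOpen_lt continuous_const (by fun_prop)).mem_nhds ?_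
      simp only [mem_ofPred_eq, hℓ, mem_sphere_zero_iff_norm.1 hx]
      norm_num
  refine ⟨insert 0 (t.image fun x => (2 : ℝ) • ℓ x), fun x => ?_⟩
  rcases eq_or_ne x 0 with rfl | hx
  · exact ⟨0, Finset.mem_insert_self _ _, by simp⟩
  have hunit : ‖x‖⁻¹ • x ∈ Metric.sphere (0 : E) 1 := by simp [norm_smul, hx]
  obtain ⟨y, hy, hxy⟩ := mem_iUnion₂.1 (ht hunit)
  refine ⟨(2 : ℝ) • ℓ y, Finset.mem_insert_of_mem (Finset.mem_image_of_mem _ hy), ?_⟩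
  simp only [mem_ofPred_eq, map_smul, smul_eq_mul] at hxy
  rw [mul_left_comm, ← div_eq_inv_mul, one_lt_div (norm_pos_iff.2 hx)] at hxy
  simpa using hxy.le

theorem exists_le_exp_neg_norm {F : E → ℝ}
    (hF : ∀ ℓ : StrongDual ℝ E, ∃ C, ∀ x, F x ≤ C * Real.exp (ℓ x)) {r : ℝ} (hr : 0 ≤ r) :
    ∃ C, ∀ x, F x ≤ C * Real.exp (-(r * ‖x‖)) := by
  obtain ⟨t, ht⟩ := exists_finset_strongDual_norm_le E
  choose C hC using fun ℓ : StrongDual ℝ E => hF (-(r • ℓ))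
  refine ⟨∑ ℓ ∈ t, |C ℓ|, fun x => ?_⟩
  obtain ⟨ℓ, hℓ, hx⟩ := ht x
  calc F x ≤ C ℓ * Real.exp (-(r * ℓ x)) := hC ℓ x
    _ ≤ |C ℓ| * Real.exp (-(r * ‖x‖)) := by
      gcongr
      exact le_abs_self _
    _ ≤ _ := by
      gcongr
      exact Finset.single_le_sum (fun ℓ _ => abs_nonneg (C ℓ)) hℓ

variable [MeasurableSpace E] [BorelSpace E] {μ : Measure E} [μ.IsAddHaarMeasure]

theorem integrable_exp_neg_norm : Integrable (fun x => Real.exp (-‖x‖)) μ := by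
  set m := finrank ℝ E + 1
  have hm : Integrable (fun x => (m.factorial * Real.exp 1) * (1 + ‖x‖) ^ (-(m : ℝ))) μ :=
    (integrable_one_add_norm (by simp [m])).const_mul _
  refine hm.mono' (by fun_prop) (.of_forall fun x => ?_)
  have hpow := Real.pow_div_factorial_le_exp (1 + ‖x‖) (by positivity) m
  rw [Real.exp_add, div_le_iff₀ (by positivity)] at hpow
  rw [Real.norm_of_nonneg (by positivity), Real.rpow_neg (by positivity), Real.rpow_natCast,
    ← div_eq_mul_inv, le_div_iff₀ (by positivity), Real.exp_neg, inv_mul_le_iff₀ (by positivity)]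
  linarith

variable {F : E → ℝ}

theorem integrable_of_forall_le_exp (hFm : AEStronglyMeasurable F μ) (hF₀ : 0 ≤ F)
    (hF : ∀ ℓ : StrongDual ℝ E, ∃ C, ∀ x, F x ≤ C * Real.exp (ℓ x)) : Integrable F μ := by
  obtain ⟨C, hC⟩ := exists_le_exp_neg_norm hF zero_le_one
  refine (integrable_exp_neg_norm.const_mul C).mono' hFm (.of_forall fun x => ?_)
  simpa [Real.norm_of_nonneg (hF₀ x)] using hC x

theorem integrable_smul_self_of_forall_le_exp (hFm : AEStronglyMeasurable F μ) (hF₀ : 0 ≤ F)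
    (hF : ∀ ℓ : StrongDual ℝ E, ∃ C, ∀ x, F x ≤ C * Real.exp (ℓ x)) :
    Integrable (fun x => F x • x) μ := by
  obtain ⟨C, hC⟩ := exists_le_exp_neg_norm hF zero_le_two
  refine (integrable_exp_neg_norm.const_mul C).mono' (hFm.smul (by fun_prop))
    (.of_forall fun x => ?_)
  have hx : ‖x‖ ≤ Real.exp ‖x‖ := (Real.add_one_le_exp _).trans' (by linarith)
  calc ‖F x • x‖ = F x * ‖x‖ := by rw [norm_smul, Real.norm_of_nonneg (hF₀ x)]
    _ ≤ C * Real.exp (-(2 * ‖x‖)) * Real.exp ‖x‖ :=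
      mul_le_mul (hC x) hx (norm_nonneg x) ((hF₀ x).trans (hC x))
    _ = C * Real.exp (-‖x‖) := by
      rw [mul_assoc, ← Real.exp_add]
      ring_nf

end ExponentialDecay

section PolarPair

/-- Two positive functions polar to each other for the pairing `B`, up to the constant `K`. For
`F = exp f`, `G = exp g` and `K = 1` this is the condition `f x + g y ≤ -B x y`; the constant is
there to make the notion stable under integrating out a variable. -/
structure IsPolarPair {V : Type*} [AddCommGroup V] [Module ℝ V] [MeasurableSpace V]
    (B : LinearMap.BilinForm ℝ V) (K : ℝ) (F G : V → ℝ) : Prop where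
  measurable_left : Measurable F
  measurable_right : Measurable G
  pos_left : ∀ x, 0 < F x
  pos_right : ∀ y, 0 < G y
  mul_le : ∀ x y, F x * G y ≤ K * Real.exp (-B x y)

namespace IsPolarPair

section Algebra

variable {V W : Type*} [AddCommGroup V] [Module ℝ V] [MeasurableSpace V] [AddCommGroup W]
  [Module ℝ W] [MeasurableSpace W] {B : LinearMap.BilinForm ℝ V} {K : ℝ} {F G : V → ℝ}

theorem const_pos (h : IsPolarPair B K F G) : 0 < K :=
  pos_of_mul_pos_left ((mul_pos (h.pos_left 0) (h.pos_right 0)).trans_le (h.mul_le 0 0))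
    (Real.exp_nonneg _)

theorem symm (h : IsPolarPair B K F G) (hB : B.IsSymm) : IsPolarPair B K G F where
  measurable_left := h.measurable_right
  measurable_right := h.measurable_left
  pos_left := h.pos_right
  pos_right := h.pos_left
  mul_le x y := by simpa only [mul_comm, hB.eq x y] using h.mul_le y x

theorem comp (h : IsPolarPair B K F G) {B' : LinearMap.BilinForm ℝ W} {S T : W → V}
    (hS : Measurable S) (hT : Measurable T) (hB : ∀ x y, B (S x) (T y) = B' x y) :
    IsPolarPair B' K (fun x => F (S x)) (fun y => G (T y)) where
  measurable_left := h.measurable_left.comp hS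
  measurable_right := h.measurable_right.comp hT
  pos_left x := h.pos_left (S x)
  pos_right y := h.pos_right (T y)
  mul_le x y := hB x y ▸ h.mul_le (S x) (T y)

end Algebra

variable {V : Type*} [NormedAddCommGroup V] [NormedSpace ℝ V] [FiniteDimensional ℝ V]
  [MeasurableSpace V] {B : LinearMap.BilinForm ℝ V} {K : ℝ} {F G : V → ℝ}

theorem exists_left_le_exp (h : IsPolarPair B K F G) (hB : B.Nondegenerate)
    (ℓ : StrongDual ℝ V) : ∃ C, ∀ x, F x ≤ C * Real.exp (ℓ x) := by
  set y := (B.flip.toDual hB.flip).symm (-ℓ)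
  have hy : ∀ x, B x y = -ℓ x := fun x =>
    LinearMap.BilinForm.apply_toDual_symm_apply (B := B.flip) (hB := hB.flip) (-ℓ : V →ₗ[ℝ] ℝ) x
  refine ⟨K / G y, fun x => ?_⟩
  rw [div_mul_eq_mul_div, le_div_iff₀ (h.pos_right y)]
  simpa only [hy, neg_neg] using h.mul_le x y

variable [BorelSpace V]

theorem translate (h : IsPolarPair B K F G) (a : V) :
    IsPolarPair B K (fun x => F x * Real.exp (B x a)) (fun y => G (a + y)) where
  measurable_left := h.measurable_left.mul
    (B.flip a).continuous_of_finiteDimensional.measurable.exp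
  measurable_right := h.measurable_right.comp (measurable_const_add a)
  pos_left x := mul_pos (h.pos_left x) (Real.exp_pos _)
  pos_right y := h.pos_right (a + y)
  mul_le x y := by
    calc F x * Real.exp (B x a) * G (a + y) = F x * G (a + y) * Real.exp (B x a) := by ring
      _ ≤ K * Real.exp (-B x (a + y)) * Real.exp (B x a) :=
        mul_le_mul_of_nonneg_right (h.mul_le x (a + y)) (Real.exp_nonneg _)
      _ = K * Real.exp (-B x y) := by
        rw [mul_assoc, ← Real.exp_add, map_add]
        ring_nf

variable {μ : Measure V} [μ.IsAddHaarMeasure]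

theorem integrable_left (h : IsPolarPair B K F G) (hB : B.Nondegenerate) : Integrable F μ :=
  integrable_of_forall_le_exp h.measurable_left.aestronglyMeasurable (fun x => (h.pos_left x).le)
    (h.exists_left_le_exp hB)

theorem integrable_left_smul_self (h : IsPolarPair B K F G) (hB : B.Nondegenerate) :
    Integrable (fun x => F x • x) μ :=
  integrable_smul_self_of_forall_le_exp h.measurable_left.aestronglyMeasurable
    (fun x => (h.pos_left x).le) (h.exists_left_le_exp hB)

end IsPolarPair

end PolarPair

section ProdForm

variable {E F : Type*} [AddCommGroup E] [Module ℝ E] [AddCommGroup F] [Module ℝ F]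
  {B : LinearMap.BilinForm ℝ E} {C : LinearMap.BilinForm ℝ F}

/-- The orthogonal sum of two bilinear forms. It serves as the pairing on `ℝ × E`, so that the
(non-Euclidean) sup norm of the product plays no role in the notion of polarity. -/
def prodForm (B : LinearMap.BilinForm ℝ E) (C : LinearMap.BilinForm ℝ F) :
    LinearMap.BilinForm ℝ (E × F) :=
  B.compl₁₂ (LinearMap.fst ℝ E F) (LinearMap.fst ℝ E F) +
    C.compl₁₂ (LinearMap.snd ℝ E F) (LinearMap.snd ℝ E F)

theorem prodForm_apply (p q : E × F) : prodForm B C p q = B p.1 q.1 + C p.2 q.2 := rfl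

theorem prodForm_isSymm (hB : B.IsSymm) (hC : C.IsSymm) : (prodForm B C).IsSymm where
  eq p q := by rw [prodForm_apply, prodForm_apply, hB.eq, hC.eq]

theorem prodForm_nondegenerate (hB : B.Nondegenerate) (hC : C.Nondegenerate) :
    (prodForm B C).Nondegenerate where
  left p hp := Prod.ext (hB.1 _ fun x => by simpa [prodForm_apply] using hp (x, 0))
    (hC.1 _ fun y => by simpa [prodForm_apply] using hp (0, y))
  right p hp := Prod.ext (hB.2 _ fun x => by simpa [prodForm_apply] using hp (x, 0))
    (hC.2 _ fun y => by simpa [prodForm_apply] using hp (0, y))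

theorem mul_isSymm : LinearMap.BilinForm.IsSymm (LinearMap.mul ℝ ℝ) := ⟨mul_comm⟩

theorem mul_nondegenerate : LinearMap.BilinForm.Nondegenerate (LinearMap.mul ℝ ℝ) :=
  ⟨fun x hx => by simpa using hx 1, fun x hx => by simpa using hx 1⟩

theorem innerₗ_isSymm (E : Type*) [NormedAddCommGroup E] [InnerProductSpace ℝ E] :
    LinearMap.BilinForm.IsSymm (innerₗ E) := ⟨fun x y => real_inner_comm y x⟩

theorem innerₗ_nondegenerate (E : Type*) [NormedAddCommGroup E] [InnerProductSpace ℝ E] :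
    LinearMap.BilinForm.Nondegenerate (innerₗ E) :=
  ⟨fun x hx => inner_self_eq_zero.1 (hx x), fun x hx => inner_self_eq_zero.1 (hx x)⟩

end ProdForm

section ProductMeasure

theorem setIntegral_pos_of_isOpen {α : Type*} [TopologicalSpace α] [MeasurableSpace α]
    [OpensMeasurableSpace α] {μ : Measure α} [μ.IsOpenPosMeasure] {s : Set α} {F : α → ℝ}
    (hs : IsOpen s) (hs' : s.Nonempty) (hF : Integrable F μ) (hpos : ∀ x ∈ s, 0 < F x) :
    0 < ∫ x in s, F x ∂μ := by
  rw [setIntegral_pos_iff_support_of_nonneg_ae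
    (ae_restrict_of_forall_mem hs.measurableSet fun x hx => (hpos x hx).le) hF.integrableOn,
    inter_eq_right.2 fun x hx => Function.mem_support.2 (hpos x hx).ne']
  exact hs.measure_pos μ hs'

variable {α X : Type*} [MeasureSpace α] [NormedAddCommGroup X] [NormedSpace ℝ X]

theorem integral_eq_setIntegral_Iio_add_Ioi {Φ : ℝ × α → X} (hΦ : Integrable Φ) :
    ∫ p, Φ p = (∫ p in Iio 0 ×ˢ univ, Φ p) + ∫ p in Ioi 0 ×ˢ univ, Φ p := by
  have hIio : (Iio (0 : ℝ) ×ˢ univ : Set (ℝ × α)) =ᵐ[volume] Iic (0 : ℝ) ×ˢ univ :=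
    Measure.set_prod_ae_eq Iio_ae_eq_Iic Filter.EventuallyEq.rfl
  have hIoi : (Ioi (0 : ℝ) ×ˢ univ : Set (ℝ × α)) = (Iic (0 : ℝ) ×ˢ univ)ᶜ := by
    rw [prod_univ, prod_univ, ← preimage_compl, compl_Iic]
  rw [setIntegral_congr_set hIio, hIoi,
    integral_add_compl (measurableSet_Iic.prod MeasurableSet.univ) hΦ]

variable [SFinite (volume : Measure α)] in
theorem setIntegral_prod_univ_symm {Φ : ℝ × α → X} (hΦ : Integrable Φ) (I : Set ℝ) :
    ∫ p in I ×ˢ univ, Φ p = ∫ y, ∫ s in I, Φ (s, y) := by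
  have hrestrict : (volume.restrict (I ×ˢ univ) : Measure (ℝ × α)) =
      (volume.restrict I).prod volume := by
    rw [Measure.volume_eq_prod, ← Measure.prod_restrict, Measure.restrict_univ]
  have hint := hΦ.integrableOn (s := I ×ˢ univ)
  rw [IntegrableOn, hrestrict] at hint
  rw [hrestrict, integral_prod_symm _ hint]

instance isAddHaarMeasure_volume_real_prod {E : Type*} [NormedAddCommGroup E] [MeasureSpace E]
    [BorelSpace E] [SFinite (volume : Measure E)] [(volume : Measure E).IsAddHaarMeasure] :
    (volume : Measure (ℝ × E)).IsAddHaarMeasure :=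
  inferInstanceAs (volume.prod volume).IsAddHaarMeasure

end ProductMeasure

section Marginal

theorem IsPolarPair.setIntegral_Ioi_mul_le {K : ℝ} {F G : ℝ → ℝ}
    (h : IsPolarPair (LinearMap.mul ℝ ℝ) K F G) :
    (∫ s in Ioi 0, F s) * (∫ t in Ioi 0, G t) ≤ K * (Real.pi / 2) := by
  have hK := h.const_pos.le
  have key := lintegral_Ioi_mul_lintegral_Ioi_le h.measurable_left.ennreal_ofReal
    h.measurable_right.ennreal_ofReal (K := ENNReal.ofReal K) fun s t _ _ => by
      rw [← ENNReal.ofReal_mul (h.pos_left s).le, ← ENNReal.ofReal_mul hK]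
      exact ENNReal.ofReal_le_ofReal (h.mul_le s t)
  rw [integral_eq_lintegral_of_nonneg_ae (.of_forall fun s => (h.pos_left s).le)
      h.measurable_left.aestronglyMeasurable,
    integral_eq_lintegral_of_nonneg_ae (.of_forall fun t => (h.pos_right t).le)
      h.measurable_right.aestronglyMeasurable, ← ENNReal.toReal_mul]
  refine ENNReal.toReal_le_of_le_ofReal (by positivity) ?_
  rwa [ENNReal.ofReal_mul hK]

theorem IsPolarPair.setIntegral_Iio_mul_le {K : ℝ} {F G : ℝ → ℝ}
    (h : IsPolarPair (LinearMap.mul ℝ ℝ) K F G) :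
    (∫ s in Iio 0, F s) * (∫ t in Iio 0, G t) ≤ K * (Real.pi / 2) := by
  have hneg : IsPolarPair (LinearMap.mul ℝ ℝ) K (fun s => F (-s)) (fun t => G (-t)) :=
    h.comp measurable_neg measurable_neg fun s t => by simp
  simpa only [integral_comp_neg_Ioi, neg_zero, integral_Iic_eq_integral_Iio]
    using hneg.setIntegral_Ioi_mul_le

variable {E : Type*} [AddCommGroup E] [Module ℝ E] [MeasurableSpace E]
  {B : LinearMap.BilinForm ℝ E} {K : ℝ} {F G : ℝ × E → ℝ} {I : Set ℝ}

theorem IsPolarPair.fiber (h : IsPolarPair (prodForm (LinearMap.mul ℝ ℝ) B) K F G) (y w : E) :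
    IsPolarPair (LinearMap.mul ℝ ℝ) (K * Real.exp (-B y w)) (fun s => F (s, y))
      (fun t => G (t, w)) where
  measurable_left := h.measurable_left.comp measurable_prodMk_right
  measurable_right := h.measurable_right.comp measurable_prodMk_right
  pos_left s := h.pos_left (s, y)
  pos_right t := h.pos_right (t, w)
  mul_le s t := by
    refine (h.mul_le (s, y) (t, w)).trans_eq ?_
    rw [prodForm_apply, mul_assoc, ← Real.exp_add]
    ring_nf

theorem IsPolarPair.measurable_marginal
    (h : IsPolarPair (prodForm (LinearMap.mul ℝ ℝ) B) K F G) (I : Set ℝ) :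
    Measurable fun y => ∫ s in I, F (s, y) :=
  h.measurable_left.stronglyMeasurable.integral_prod_left'.measurable

theorem IsPolarPair.marginal_pos
    (h : IsPolarPair (prodForm (LinearMap.mul ℝ ℝ) B) K F G)
    (hI : I = Iio 0 ∨ I = Ioi 0) (y : E) : 0 < ∫ s in I, F (s, y) := by
  have hopen : IsOpen I ∧ I.Nonempty := by
    rcases hI with rfl | rfl
    exacts [⟨isOpen_Iio, nonempty_Iio⟩, ⟨isOpen_Ioi, nonempty_Ioi⟩]
  exact setIntegral_pos_of_isOpen hopen.1 hopen.2
    ((h.fiber y 0).integrable_left mul_nondegenerate) fun s _ => h.pos_left (s, y)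

theorem IsPolarPair.marginal (h : IsPolarPair (prodForm (LinearMap.mul ℝ ℝ) B) K F G)
    (hB : B.IsSymm) (hI : I = Iio 0 ∨ I = Ioi 0) :
    IsPolarPair B (K * (Real.pi / 2)) (fun y => ∫ s in I, F (s, y))
      (fun w => ∫ t in I, G (t, w)) where
  measurable_left := h.measurable_marginal I
  measurable_right := (h.symm (prodForm_isSymm mul_isSymm hB)).measurable_marginal I
  pos_left := h.marginal_pos hI
  pos_right := (h.symm (prodForm_isSymm mul_isSymm hB)).marginal_pos hI
  mul_le y w := by
    rw [mul_right_comm]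
    rcases hI with rfl | rfl
    exacts [(h.fiber y w).setIntegral_Iio_mul_le, (h.fiber y w).setIntegral_Ioi_mul_le]

end Marginal

section HalfSpace

/-- The conclusion of the functional Santaló inequality in dimension `n`, for polar pairs with
respect to `B` whose first function has its barycenter at the origin. -/
def SantaloInequality {V : Type*} [NormedAddCommGroup V] [NormedSpace ℝ V] [MeasureSpace V]
    (B : LinearMap.BilinForm ℝ V) (n : ℕ) : Prop :=
  ∀ (K : ℝ) (F G : V → ℝ), IsPolarPair B K F G → ∫ x, F x • x = 0 →
    (∫ x, F x) * (∫ y, G y) ≤ K * (2 * Real.pi) ^ n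

/-- The hyperplane `{0} × E` halves the mass of `F`, and the barycenters of the two halves lie on
the axis `ℝ × {0}`. -/
structure IsBalanced {E : Type*} [NormedAddCommGroup E] [NormedSpace ℝ E] [MeasureSpace E]
    (F : ℝ × E → ℝ) : Prop where
  mass_eq : ∫ p in Iio 0 ×ˢ univ, F p = ∫ p in Ioi 0 ×ˢ univ, F p
  moment_Iio : ∫ p in Iio 0 ×ˢ univ, F p • p.2 = 0
  moment_Ioi : ∫ p in Ioi 0 ×ˢ univ, F p • p.2 = 0

variable {E : Type*} [NormedAddCommGroup E] [NormedSpace ℝ E] [FiniteDimensional ℝ E]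
  [MeasureSpace E] [BorelSpace E] [(volume : Measure E).IsAddHaarMeasure]
  {B : LinearMap.BilinForm ℝ E} {K : ℝ} {F G : ℝ × E → ℝ} {I : Set ℝ}

theorem SantaloInequality.setIntegral_mul_le {n : ℕ} (hn : SantaloInequality B n) (hB : B.IsSymm)
    (hB' : B.Nondegenerate) (h : IsPolarPair (prodForm (LinearMap.mul ℝ ℝ) B) K F G)
    (hI : I = Iio 0 ∨ I = Ioi 0) (hG : ∫ p in I ×ˢ univ, G p • p.2 = 0) :
    (∫ p in I ×ˢ univ, F p) * (∫ p in I ×ˢ univ, G p) ≤ K * (Real.pi / 2) * (2 * Real.pi) ^ n := by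
  have hprod := prodForm_nondegenerate mul_nondegenerate hB'
  have hs := h.symm (prodForm_isSymm mul_isSymm hB)
  have hGp : Integrable fun p : ℝ × E => G p • p.2 :=
    (ContinuousLinearMap.snd ℝ ℝ E).integrable_comp (hs.integrable_left_smul_self hprod)
  have hcenter : ∫ w, (∫ t in I, G (t, w)) • w = 0 := by
    simpa only [setIntegral_prod_univ_symm hGp, integral_smul_const] using hG
  rw [mul_comm, setIntegral_prod_univ_symm (h.integrable_left hprod),
    setIntegral_prod_univ_symm (hs.integrable_left hprod)]
  exact hn _ _ _ (hs.marginal hB hI) hcenter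

theorem SantaloInequality.integral_mul_le_of_isBalanced {n : ℕ} (hn : SantaloInequality B n)
    (hB : B.IsSymm) (hB' : B.Nondegenerate)
    (h : IsPolarPair (prodForm (LinearMap.mul ℝ ℝ) B) K F G) (hG : IsBalanced G) :
    (∫ p, F p) * (∫ p, G p) ≤ K * (2 * Real.pi) ^ (n + 1) := by
  have hprod := prodForm_nondegenerate mul_nondegenerate hB'
  have hlower := hn.setIntegral_mul_le hB hB' h (.inl rfl) hG.moment_Iio
  have hupper := hn.setIntegral_mul_le hB hB' h (.inr rfl) hG.moment_Ioi
  rw [hG.mass_eq] at hlower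
  rw [integral_eq_setIntegral_Iio_add_Ioi (h.integrable_left hprod),
    integral_eq_setIntegral_Iio_add_Ioi
      ((h.symm (prodForm_isSymm mul_isSymm hB)).integrable_left hprod), hG.mass_eq, pow_succ]
  linarith

end HalfSpace

section Balancing

theorem exists_median {φ : ℝ → ℝ} (hφ : Integrable φ) (hpos : 0 < ∫ s, φ s) :
    ∃ c, ∫ s in Iio c, φ s = ∫ s in Ioi c, φ s := by
  have hsplit : ∀ c, (∫ s in Iic c, φ s) + ∫ s in Ioi c, φ s = ∫ s, φ s := fun c =>
    intervalIntegral.integral_Iic_add_Ioi hφ.integrableOn hφ.integrableOn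
  have hprim : ∀ c, ∫ s in (0 : ℝ)..c, φ s = (∫ s in Iic c, φ s) - ∫ s in Iic 0, φ s :=
    fun c => (intervalIntegral.integral_Iic_sub_Iic hφ.integrableOn hφ.integrableOn).symm
  have htop := intervalIntegral_tendsto_integral_Ioi 0 hφ.integrableOn Filter.tendsto_id
  have hbot := (intervalIntegral_tendsto_integral_Iic 0 hφ.integrableOn Filter.tendsto_id).neg
  simp only [id, ← intervalIntegral.integral_symm] at htop hbot
  obtain ⟨a, ha⟩ := (hbot.eventually_lt_const (show -(∫ s in Iic 0, φ s) <
    (∫ s, φ s) / 2 - ∫ s in Iic 0, φ s by linarith)).exists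
  obtain ⟨b, hb⟩ := (htop.eventually_const_lt (show (∫ s, φ s) / 2 - (∫ s in Iic 0, φ s) <
    ∫ s in Ioi 0, φ s by linarith [hsplit 0])).exists
  obtain ⟨c, hc⟩ := mem_range_of_exists_le_of_exists_ge (hφ.continuous_primitive 0)
    ⟨a, ha.le⟩ ⟨b, hb.le⟩
  refine ⟨c, ?_⟩
  rw [← integral_Iic_eq_integral_Iio]
  linarith [hsplit c, hprim c]

theorem exists_smul_add_smul_eq {k M : Type*} [Field k] [AddCommGroup M] [Module k M]
    {m a a' : k} (hm : m ≠ 0) (ha : a ≠ a') (b b' : M) :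
    ∃ z v : M, m • z + a • v = b ∧ m • z + a' • v = b' := by
  have ha' : a - a' ≠ 0 := sub_ne_zero.2 ha
  set v := (a - a')⁻¹ • (b - b')
  have hv : (a - a') • v = b - b' := smul_inv_smul₀ ha' _
  refine ⟨m⁻¹ • (b - a • v), v, ?_, ?_⟩ <;> rw [smul_inv_smul₀ hm]
  · abel
  · rw [sub_smul] at hv
    rw [sub_add, hv, sub_sub_cancel]

section FiberTranslation

variable {X E : Type*} [MeasurableSpace X] [MeasurableSpace E] [AddGroup E] [MeasurableAdd₂ E]
  [MeasurableSub₂ E] {u : X → E}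

/-- Translation of each fiber `{x} × E` by the vector `u x`. -/
def fiberTranslation (hu : Measurable u) : X × E ≃ᵐ X × E where
  toFun p := (p.1, p.2 + u p.1)
  invFun p := (p.1, p.2 - u p.1)
  left_inv p := by simp
  right_inv p := by simp
  measurable_toFun := by simp only [Equiv.coe_fn_mk]; fun_prop
  measurable_invFun := by simp only [Equiv.coe_fn_symm_mk]; fun_prop

theorem fiberTranslation_apply (hu : Measurable u) (p : X × E) :
    fiberTranslation hu p = (p.1, p.2 + u p.1) := rfl

variable {μ : Measure X} {ν : Measure E} [SFinite μ] [SFinite ν] [ν.IsAddRightInvariant]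

theorem measurePreserving_fiberTranslation (hu : Measurable u) :
    MeasurePreserving (fiberTranslation hu) (μ.prod ν) (μ.prod ν) :=
  (MeasurePreserving.id μ).skew_product (g := fun x y => y + u x)
    (measurable_snd.add (hu.comp measurable_fst))
    (.of_forall fun x => map_add_right_eq_self ν (u x))

theorem setIntegral_comp_fiberTranslation {Z : Type*} [NormedAddCommGroup Z] [NormedSpace ℝ Z]
    (hu : Measurable u) (I : Set X) (Φ : X × E → Z) :
    ∫ p in I ×ˢ univ, Φ (fiberTranslation hu p) ∂μ.prod ν = ∫ p in I ×ˢ univ, Φ p ∂μ.prod ν := by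
  have hI : fiberTranslation hu ⁻¹' (I ×ˢ univ) = I ×ˢ univ := by
    ext p
    simp [fiberTranslation_apply]
  simpa only [hI] using (measurePreserving_fiberTranslation hu).setIntegral_preimage_emb
    (fiberTranslation hu).measurableEmbedding Φ (I ×ˢ univ)

end FiberTranslation

section Shear

variable {E : Type*} [NormedAddCommGroup E] [NormedSpace ℝ E] [FiniteDimensional ℝ E]
  [MeasurableSpace E] [BorelSpace E]

/-- The shear of `ℝ × E` along `E` taking the axis `ℝ × {0}` to the line spanned by `(1, v)`. -/
def shear (v : E) : ℝ × E ≃ᵐ ℝ × E :=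
  fiberTranslation (u := fun t : ℝ => t • v) (by fun_prop)

/-- The inverse of the adjoint of `shear v` for the pairing `prodForm (LinearMap.mul ℝ ℝ) B`. -/
def dualShear (B : LinearMap.BilinForm ℝ E) (v : E) : ℝ × E ≃ᵐ ℝ × E :=
  MeasurableEquiv.prodComm.trans ((fiberTranslation (u := fun y => -B y v)
    (B.flip v).continuous_of_finiteDimensional.measurable.neg).trans MeasurableEquiv.prodComm)

theorem prodForm_dualShear_shear (B : LinearMap.BilinForm ℝ E) (v : E) (p q : ℝ × E) :
    prodForm (LinearMap.mul ℝ ℝ) B (dualShear B v p) (shear v q) =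
      prodForm (LinearMap.mul ℝ ℝ) B p q := by
  have hdual : dualShear B v p = (p.1 - B p.2 v, p.2) :=
    Prod.ext (sub_eq_add_neg _ _).symm rfl
  simp only [hdual, prodForm_apply, shear, fiberTranslation_apply, LinearMap.mul_apply', map_add,
    map_smul, smul_eq_mul]
  ring

end Shear

variable {E : Type*} [NormedAddCommGroup E] [NormedSpace ℝ E] [FiniteDimensional ℝ E]
  [MeasureSpace E] [BorelSpace E] [(volume : Measure E).IsAddHaarMeasure]

theorem measurePreserving_shear (v : E) : MeasurePreserving (shear v) :=
  measurePreserving_fiberTranslation _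

theorem measurePreserving_dualShear (B : LinearMap.BilinForm ℝ E) (v : E) :
    MeasurePreserving (dualShear B v) :=
  Measure.measurePreserving_swap.comp
    ((measurePreserving_fiberTranslation _).comp Measure.measurePreserving_swap)

variable {G : ℝ × E → ℝ}

theorem setIntegral_comp_add_shear {Z : Type*} [NormedAddCommGroup Z] [NormedSpace ℝ Z] (z v : E)
    (I : Set ℝ) (Φ : ℝ × E → Z) :
    ∫ p in I ×ˢ univ, Φ ((0, z) + shear v p) = ∫ p in I ×ˢ univ, Φ p := by
  have hshear : ∀ p : ℝ × E, (0, z) + shear v p =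
      fiberTranslation (u := fun t : ℝ => z + t • v) (by fun_prop) p := fun p => by
    simp only [shear, fiberTranslation_apply, Prod.mk_add_mk, zero_add, add_left_comm]
  simp only [hshear]
  exact setIntegral_comp_fiberTranslation _ I Φ

theorem setIntegral_add_shear_smul_snd (z v : E) (I : Set ℝ) (hG : Integrable G)
    (hGp : Integrable fun p => G p • p) :
    ∫ p in I ×ˢ univ, G ((0, z) + shear v p) • p.2 =
      (∫ p in I ×ˢ univ, G p • p.2) -
        ((∫ p in I ×ˢ univ, G p) • z + (∫ p in I ×ˢ univ, G p * p.1) • v) := by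
  have hfst : Integrable fun p : ℝ × E => G p * p.1 :=
    (ContinuousLinearMap.fst ℝ ℝ E).integrable_comp hGp
  have hsnd : Integrable fun p : ℝ × E => G p • p.2 :=
    (ContinuousLinearMap.snd ℝ ℝ E).integrable_comp hGp
  have hz := (hG.smul_const z).integrableOn (s := I ×ˢ univ)
  have hv := (hfst.smul_const v).integrableOn (s := I ×ˢ univ)
  have hzv : IntegrableOn (fun p => G p • z + (G p * p.1) • v) (I ×ˢ univ) := hz.add hv
  calc ∫ p in I ×ˢ univ, G ((0, z) + shear v p) • p.2
      = ∫ p in I ×ˢ univ, G p • (p.2 - (z + p.1 • v)) := by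
        rw [← setIntegral_comp_add_shear z v I fun p => G p • (p.2 - (z + p.1 • v))]
        simp only [shear, fiberTranslation_apply, Prod.mk_add_mk, zero_add, add_left_comm z,
          add_sub_cancel_right]
    _ = ∫ p in I ×ˢ univ, (G p • p.2 - (G p • z + (G p * p.1) • v)) := by
        simp only [smul_sub, smul_add, smul_smul]
    _ = _ := by
        rw [integral_sub hsnd.integrableOn hzv, integral_add hz hv, integral_smul_const,
          integral_smul_const]

theorem exists_isBalanced_shear (hpos : ∀ p, 0 < G p) (hG : Integrable G)
    (hGp : Integrable fun p => G p • p)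
    (hmass : ∫ p in Iio 0 ×ˢ univ, G p = ∫ p in Ioi 0 ×ˢ univ, G p) :
    ∃ z v : E, IsBalanced fun p => G ((0, z) + shear v p) := by
  have hfst : Integrable fun p : ℝ × E => G p * p.1 :=
    (ContinuousLinearMap.fst ℝ ℝ E).integrable_comp hGp
  have hIio : IsOpen (Iio (0 : ℝ) ×ˢ (univ : Set E)) := isOpen_Iio.prod isOpen_univ
  have hIoi : IsOpen (Ioi (0 : ℝ) ×ˢ (univ : Set E)) := isOpen_Ioi.prod isOpen_univ
  have hm : 0 < ∫ p in Ioi 0 ×ˢ univ, G p :=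
    setIntegral_pos_of_isOpen hIoi (by simp) hG fun p _ => hpos p
  have hupper : 0 < ∫ p in Ioi 0 ×ˢ univ, G p * p.1 :=
    setIntegral_pos_of_isOpen hIoi (by simp) hfst fun p hp => mul_pos (hpos p) hp.1
  have hlower : 0 < ∫ p in Iio 0 ×ˢ univ, -(G p * p.1) :=
    setIntegral_pos_of_isOpen hIio (by simp) hfst.neg fun p hp =>
      neg_pos.2 (mul_neg_of_pos_of_neg (hpos p) hp.1)
  rw [integral_neg] at hlower
  obtain ⟨z, v, hzlower, hzupper⟩ := exists_smul_add_smul_eq hm.ne'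
    (show ∫ p in Iio 0 ×ˢ univ, G p * p.1 ≠ ∫ p in Ioi 0 ×ˢ univ, G p * p.1 by linarith)
    (∫ p in Iio 0 ×ˢ univ, G p • p.2) (∫ p in Ioi 0 ×ˢ univ, G p • p.2)
  exact ⟨z, v, by rw [setIntegral_comp_add_shear, setIntegral_comp_add_shear, hmass],
    by rw [setIntegral_add_shear_smul_snd z v _ hG hGp, hmass, hzlower, sub_self],
    by rw [setIntegral_add_shear_smul_snd z v _ hG hGp, hzupper, sub_self]⟩

theorem exists_isBalanced (hpos : ∀ p, 0 < G p) (hG : Integrable G)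
    (hGp : Integrable fun p => G p • p) :
    ∃ (a : ℝ × E) (v : E), IsBalanced fun p => G (a + shear v p) := by
  have hmass : 0 < ∫ p, G p := by
    simpa using setIntegral_pos_of_isOpen isOpen_univ univ_nonempty hG fun p _ => hpos p
  rw [Measure.volume_eq_prod, integral_prod _ hG] at hmass
  obtain ⟨c, hc⟩ := exists_median hG.integral_prod_left hmass
  have hint : Integrable fun p => G ((c, 0) + p) := hG.comp_add_left (c, 0)
  have hintp : Integrable fun p => G ((c, 0) + p) • p := by
    refine ((hGp.comp_add_left (c, 0)).sub (hint.smul_const (c, 0))).congr (.of_forall fun p => ?_)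
    simp only [Pi.sub_apply, ← smul_sub, add_sub_cancel_left]
  have htranslate : ∀ I : Set ℝ, ∫ p in ((c + ·) ⁻¹' I) ×ˢ univ, G ((c, 0) + p) =
      ∫ s in I, ∫ y, G (s, y) := fun I => by
    have hpre : ((c, 0) + ·) ⁻¹' (I ×ˢ univ) = ((c + ·) ⁻¹' I) ×ˢ (univ : Set E) := by
      ext p
      simp
    rw [← hpre, (measurePreserving_add_left volume (c, (0 : E))).setIntegral_preimage_emb
      (measurableEmbedding_addLeft _), Measure.volume_eq_prod, setIntegral_prod _ hG.integrableOn]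
    simp only [Measure.restrict_univ]
  have hIio := htranslate (Iio c)
  have hIoi := htranslate (Ioi c)
  rw [preimage_const_add_Iio, sub_self] at hIio
  rw [preimage_const_add_Ioi, sub_self] at hIoi
  obtain ⟨z, v, h⟩ := exists_isBalanced_shear (fun p => hpos ((c, 0) + p)) hint hintp
    (by rw [hIio, hIoi, hc])
  exact ⟨(c, 0) + (0, z), v, by simpa only [add_assoc] using h⟩

end Balancing

section Induction

theorem integral_le_integral_mul_exp {V : Type*} [NormedAddCommGroup V] [NormedSpace ℝ V]
    [CompleteSpace V] [MeasurableSpace V] {μ : Measure V} {F : V → ℝ} (hF : Integrable F μ)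
    (hFx : Integrable (fun x => F x • x) μ) (hF₀ : ∀ x, 0 ≤ F x) (hcenter : ∫ x, F x • x ∂μ = 0)
    (ℓ : StrongDual ℝ V) (hFℓ : Integrable (fun x => F x * Real.exp (ℓ x)) μ) :
    ∫ x, F x ∂μ ≤ ∫ x, F x * Real.exp (ℓ x) ∂μ := by
  calc ∫ x, F x ∂μ = (∫ x, F x ∂μ) + ℓ (∫ x, F x • x ∂μ) := by rw [hcenter, map_zero, add_zero]
    _ = ∫ x, (F x + ℓ (F x • x)) ∂μ := by
      rw [← ℓ.integral_comp_comm hFx, integral_add hF (ℓ.integrable_comp hFx)]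
    _ ≤ ∫ x, F x * Real.exp (ℓ x) ∂μ := by
      refine integral_mono (hF.add (ℓ.integrable_comp hFx)) hFℓ fun x => ?_
      calc F x + ℓ (F x • x) = F x * (ℓ x + 1) := by
            rw [map_smul, smul_eq_mul]
            ring
        _ ≤ F x * Real.exp (ℓ x) := mul_le_mul_of_nonneg_left (Real.add_one_le_exp _) (hF₀ x)

namespace SantaloInequality

theorem real_prod {E : Type*} [NormedAddCommGroup E] [NormedSpace ℝ E] [FiniteDimensional ℝ E]
    [MeasureSpace E] [BorelSpace E] [(volume : Measure E).IsAddHaarMeasure]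
    {B : LinearMap.BilinForm ℝ E} {n : ℕ} (hn : SantaloInequality B n) (hB : B.IsSymm)
    (hB' : B.Nondegenerate) : SantaloInequality (prodForm (LinearMap.mul ℝ ℝ) B) (n + 1) := by
  intro K F G h hF
  have hnondeg := prodForm_nondegenerate mul_nondegenerate hB'
  have hs := h.symm (prodForm_isSymm mul_isSymm hB)
  obtain ⟨a, v, hbal⟩ := exists_isBalanced hs.pos_left (hs.integrable_left hnondeg)
    (hs.integrable_left_smul_self hnondeg)
  have ha := h.translate a
  have hv := ha.comp (dualShear B v).measurable (shear v).measurable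
    (prodForm_dualShear_shear B v)
  have htilt : ∫ p, F p ≤ ∫ p, F p * Real.exp (prodForm (LinearMap.mul ℝ ℝ) B p a) :=
    integral_le_integral_mul_exp (h.integrable_left hnondeg) (h.integrable_left_smul_self hnondeg)
      (fun p => (h.pos_left p).le) hF
      ((prodForm (LinearMap.mul ℝ ℝ) B).flip a).toContinuousLinearMap
      (ha.integrable_left hnondeg)
  have hG : ∫ p, G p = ∫ p, G (a + shear v p) := by
    rw [(measurePreserving_shear v).integral_comp' fun p => G (a + p), integral_add_left_eq_self]
  rw [hG]
  refine (mul_le_mul_of_nonneg_right htilt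
    (integral_nonneg fun p => (hv.pos_right p).le)).trans ?_
  rw [← (measurePreserving_dualShear B v).integral_comp']
  exact hn.integral_mul_le_of_isBalanced hB hB' hv hbal

theorem map {V W : Type*} [NormedAddCommGroup V] [NormedSpace ℝ V] [MeasureSpace V]
    [BorelSpace V] [NormedAddCommGroup W] [NormedSpace ℝ W] [MeasureSpace W] [BorelSpace W]
    {B : LinearMap.BilinForm ℝ V} {C : LinearMap.BilinForm ℝ W} {n : ℕ}
    (hn : SantaloInequality B n) (e : V ≃L[ℝ] W) (he : MeasurePreserving e)
    (hBC : ∀ x y, C (e x) (e y) = B x y) : SantaloInequality C n := by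
  intro K F G h hF
  have hemb := e.toHomeomorph.measurableEmbedding
  have hcenter : ∫ x, F (e x) • x = 0 := by
    refine e.injective ?_
    rw [map_zero, ← e.integral_comp_comm]
    simpa only [map_smul] using (he.integral_comp hemb fun y => F y • y).trans hF
  have he' : Measurable e := e.continuous.measurable
  rw [← he.integral_comp hemb F, ← he.integral_comp hemb G]
  exact hn K _ _ (h.comp he' he' hBC) hcenter

theorem map_isometry {E F : Type*} [NormedAddCommGroup E] [InnerProductSpace ℝ E]
    [FiniteDimensional ℝ E] [MeasurableSpace E] [BorelSpace E] [NormedAddCommGroup F]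
    [InnerProductSpace ℝ F] [FiniteDimensional ℝ F] [MeasurableSpace F] [BorelSpace F] {n : ℕ}
    (hn : SantaloInequality (innerₗ E) n) (e : E ≃ₗᵢ[ℝ] F) : SantaloInequality (innerₗ F) n :=
  hn.map e.toContinuousLinearEquiv e.measurePreserving e.inner_map_map

end SantaloInequality

theorem santaloInequality_euclideanSpace (n : ℕ) :
    SantaloInequality (innerₗ (EuclideanSpace ℝ (Fin n))) n := by
  induction n with
  | zero =>
    intro K F G h _
    rw [volume_euclideanSpace_eq_dirac, integral_dirac, integral_dirac]
    simpa using h.mul_le 0 0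
  | succ n ih =>
    have hprod := ih.real_prod (innerₗ_isSymm _) (innerₗ_nondegenerate _)
    have hprod₂ : SantaloInequality (innerₗ (WithLp 2 (ℝ × EuclideanSpace ℝ (Fin n)))) (n + 1) :=
      hprod.map (WithLp.prodContinuousLinearEquiv 2 ℝ ℝ _).symm (WithLp.volume_preserving_toLp _ _)
        fun x y => congrArg (· + ⟪x.2, y.2⟫) (mul_comm y.1 x.1)
    have hrank : finrank ℝ (WithLp 2 (ℝ × EuclideanSpace ℝ (Fin n))) = n + 1 := by
      rw [(WithLp.linearEquiv 2 ℝ _).finrank_eq, finrank_prod, finrank_self,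
        finrank_euclideanSpace_fin, add_comm]
    exact hprod₂.map_isometry ((stdOrthonormalBasis ℝ _).reindex (finCongr hrank)).repr

theorem santaloInequality_innerₗ (E : Type*) [NormedAddCommGroup E] [InnerProductSpace ℝ E]
    [FiniteDimensional ℝ E] [MeasurableSpace E] [BorelSpace E] :
    SantaloInequality (innerₗ E) (finrank ℝ E) :=
  (santaloInequality_euclideanSpace _).map_isometry (stdOrthonormalBasis ℝ E).repr.symm

end Induction

theorem functional_santalo_general {E : Type*} [NormedAddCommGroup E] [InnerProductSpace ℝ E]
    [FiniteDimensional ℝ E] [MeasurableSpace E] [BorelSpace E] {f g : E → ℝ} (hf : Measurable f)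
    (hg : Measurable g) (hfg : ∀ x y, f x + g y ≤ -⟪x, y⟫)
    (hbar : ∫ x, Real.exp (f x) • x = 0) :
    (∫ x, Real.exp (f x)) * (∫ y, Real.exp (g y)) ≤ (2 * Real.pi) ^ finrank ℝ E := by
  have h : IsPolarPair (innerₗ E) 1 (fun x => Real.exp (f x)) (fun y => Real.exp (g y)) :=
    { measurable_left := hf.exp
      measurable_right := hg.exp
      pos_left := fun x => Real.exp_pos _
      pos_right := fun y => Real.exp_pos _
      mul_le := fun x y => by
        rw [← Real.exp_add, one_mul]
        exact Real.exp_le_exp.2 (hfg x y) }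
  simpa only [one_mul] using santaloInequality_innerₗ E 1 _ _ h hbar

/-- **Functional Santaló inequality** (Lehec): if `f, g : ℝ^d → ℝ` are measurable with
`f(x) + g(y) ≤ -x·y` for all `x, y`, and `e^f` is integrable with barycenter at the origin,
then `(∫ e^f dx)(∫ e^g dy) ≤ (2π)^d`. -/
theorem functional_santalo (d : ℕ) (hd : 1 ≤ d)
    (f g : EuclideanSpace ℝ (Fin d) → ℝ) (hf : Measurable f) (hg : Measurable g)
    (hfg : ∀ x y, f x + g y ≤ -⟪x, y⟫)
    (hint : Integrable (fun x => Real.exp (f x)))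
    (hbar : ∫ x, Real.exp (f x) • x = 0) :
    (∫ x, Real.exp (f x)) * (∫ y, Real.exp (g y)) ≤ (2 * Real.pi) ^ d := by
  simpa only [finrank_euclideanSpace_fin] using functional_santalo_general hf hg hfg hbar
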